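/- Let s > 1, q ∈ [1,∞), let ω be an s-admissible weight on ℝ^d, let A be an invertible d×d real matrix, 0 < c < 2π, Λ₂ = c·(Aᵀ)^{−1}(ℤ^d), and D₁ = x₁ + A([0,1]^d) for some x₁ ∈ ℝ^d. Let f ∈ L¹(ℝ^d) whose support is a compact subset of the interior of D₁, and let Γ₀ ⊂⊂ Γ be open cones in ℝ^d ∖ {0}. If Σ_{λ ∈ Λ₂ ∩ Γ} (|f̂(λ)|·ω(λ))^q < ∞, then for every s-cutoff ψ one has Σ_{λ ∈ Λ₂ ∩ Γ₀} (|ℱ(ψf)(λ)|·ω(λ))^q < ∞. -/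

import Mathlib

open MeasureTheory Complex Set
open scoped ENNReal RealInnerProductSpace NNReal

noncomputable section

namespace Paper

variable {d : ℕ}

/-- The Fourier transform, normalized by `(2π)^{-d/2}`. -/
def FT (f : EuclideanSpace ℝ (Fin d) → ℂ) (ξ : EuclideanSpace ℝ (Fin d)) : ℂ :=
  ((2 * Real.pi) ^ (-(d : ℝ) / 2) : ℝ) *
    ∫ x, f x * Complex.exp (-(⟪x, ξ⟫ : ℝ) * Complex.I)

/-- The short-time Fourier transform `V_φ f (x, ξ)`. -/
def STFT (φ f : EuclideanSpace ℝ (Fin d) → ℂ) (x ξ : EuclideanSpace ℝ (Fin d)) : ℂ :=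
  ((2 * Real.pi) ^ (-(d : ℝ) / 2) : ℝ) *
    ∫ y, f y * (starRingEnd ℂ) (φ (y - x)) * Complex.exp (-(⟪ξ, y⟫ : ℝ) * Complex.I)

/-- A cone in `ℝ^d ∖ {0}`. -/
def IsCone (Γ : Set (EuclideanSpace ℝ (Fin d))) : Prop :=
  (0 : EuclideanSpace ℝ (Fin d)) ∉ Γ ∧ ∀ ξ ∈ Γ, ∀ t : ℝ, 0 < t → t • ξ ∈ Γ

/-- An `s`-cutoff: smooth, compactly supported, with Fourier transform decaying faster
than every `exp (-N |ξ|^{1/s})`. -/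
def IsSCutoff (s : ℝ) (φ : EuclideanSpace ℝ (Fin d) → ℂ) : Prop :=
  ContDiff ℝ (⊤ : ℕ∞) φ ∧ HasCompactSupport φ ∧
    ∀ N : ℝ, 0 < N → ∃ C : ℝ, 0 < C ∧
      ∀ ξ, ‖FT φ ξ‖ ≤ C * Real.exp (-N * ‖ξ‖ ^ (1 / s))

/-- An `s`-admissible weight: positive, measurable, and moderate with respect to an even
submultiplicative weight of sub-exponential growth of order `1/s`. -/
def IsSAdmissible (s : ℝ) (ω : EuclideanSpace ℝ (Fin d) → ℝ) : Prop :=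
  Measurable ω ∧ (∀ x, 0 < ω x) ∧
    ∃ v : EuclideanSpace ℝ (Fin d) → ℝ, Measurable v ∧ (∀ x, 0 < v x) ∧
      (∀ x, v (-x) = v x) ∧ (∀ x y, v (x + y) ≤ v x * v y) ∧
      ∃ C₀ k₀ C₁ : ℝ, 0 < C₀ ∧ 0 < k₀ ∧ 0 < C₁ ∧
        (∀ ξ, v ξ ≤ C₀ * Real.exp (k₀ * ‖ξ‖ ^ (1 / s))) ∧
        ∀ x y, ω (x + y) ≤ C₁ * v x * ω y

/-- The Fourier–Lebesgue seminorm `( ∫_Γ (|f̂| ω)^q )^{1/q}` (ess-sup when `q = ∞`). -/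
def FLSemi (ω : EuclideanSpace ℝ (Fin d) → ℝ) (q : ℝ≥0∞)
    (f : EuclideanSpace ℝ (Fin d) → ℂ) (Γ : Set (EuclideanSpace ℝ (Fin d))) : ℝ≥0∞ :=
  eLpNorm (fun ξ => ‖FT f ξ‖ * ω ξ) q (volume.restrict Γ)

/-- The Fourier–Lebesgue wave-front set `WF_{FL^q_ω} f`. -/
def WF_FL (s : ℝ) (q : ℝ≥0∞) (ω : EuclideanSpace ℝ (Fin d) → ℝ)
    (f : EuclideanSpace ℝ (Fin d) → ℂ) :
    Set (EuclideanSpace ℝ (Fin d) × EuclideanSpace ℝ (Fin d)) :=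
  {z | z.2 ≠ 0 ∧ ∀ φ : EuclideanSpace ℝ (Fin d) → ℂ, IsSCutoff s φ → φ z.1 ≠ 0 →
    ∀ Γ : Set (EuclideanSpace ℝ (Fin d)), IsOpen Γ → IsCone Γ → z.2 ∈ Γ →
      FLSemi ω q (fun x => φ x * f x) Γ = ∞}

/-- The `s`-wave-front set `WF_s f`. -/
def WFs (s : ℝ) (f : EuclideanSpace ℝ (Fin d) → ℂ) :
    Set (EuclideanSpace ℝ (Fin d) × EuclideanSpace ℝ (Fin d)) :=
  {z | z.2 ≠ 0 ∧ ¬ ∃ φ : EuclideanSpace ℝ (Fin d) → ℂ, IsSCutoff s φ ∧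
    (∃ U : Set (EuclideanSpace ℝ (Fin d)), IsOpen U ∧ z.1 ∈ U ∧ ∀ x ∈ U, φ x = 1) ∧
    ∃ Γ : Set (EuclideanSpace ℝ (Fin d)), IsOpen Γ ∧ IsCone Γ ∧ z.2 ∈ Γ ∧
      ∃ C k : ℝ, 0 < C ∧ 0 < k ∧
        ∀ ξ ∈ Γ, ‖FT (fun x => φ x * f x) ξ‖ ≤ C * Real.exp (-k * ‖ξ‖ ^ (1 / s))}

/-- The mixed modulation-space seminorm
`( ∫_Γ ( ∫ |V_g F(x,ξ)|^p dx )^{q/p} ω(ξ)^q dξ )^{1/q}` with the usual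
ess-sup interpretations for `p = ∞` or `q = ∞`. -/
def ModSemi (g F : EuclideanSpace ℝ (Fin d) → ℂ) (ω : EuclideanSpace ℝ (Fin d) → ℝ)
    (p q : ℝ≥0∞) (Γ : Set (EuclideanSpace ℝ (Fin d))) : ℝ≥0∞ :=
  if q = ∞ then
    essSup (fun ξ => eLpNorm (fun x => STFT g F x ξ) p volume * ENNReal.ofReal (ω ξ))
      (volume.restrict Γ)
  else
    (∫⁻ ξ in Γ, (eLpNorm (fun x => STFT g F x ξ) p volume * ENNReal.ofReal (ω ξ)) ^ q.toReal) ^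
      (1 / q.toReal)

/-- The modulation wave-front set `WF_{M^{p,q}_ω} f`, with window `g`. -/
def WF_M (s : ℝ) (p q : ℝ≥0∞) (ω : EuclideanSpace ℝ (Fin d) → ℝ)
    (g f : EuclideanSpace ℝ (Fin d) → ℂ) :
    Set (EuclideanSpace ℝ (Fin d) × EuclideanSpace ℝ (Fin d)) :=
  {z | z.2 ≠ 0 ∧ ∀ φ : EuclideanSpace ℝ (Fin d) → ℂ, IsSCutoff s φ → φ z.1 ≠ 0 →
    ∀ Γ : Set (EuclideanSpace ℝ (Fin d)), IsOpen Γ → IsCone Γ → z.2 ∈ Γ →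
      ModSemi g (fun x => φ x * f x) ω p q Γ = ∞}

/-- Reinterpret a plain vector as a point of Euclidean space. -/
def toE (x : Fin d → ℝ) : EuclideanSpace ℝ (Fin d) :=
  (EuclideanSpace.equiv (Fin d) ℝ).symm x

/-- The point `A k` of the lattice `A(ℤ^d)`. -/
def latPt (A : Matrix (Fin d) (Fin d) ℝ) (k : Fin d → ℤ) : EuclideanSpace ℝ (Fin d) :=
  toE (A.mulVec fun i => (k i : ℝ))

/-- The point `c (Aᵀ)⁻¹ k` of the dual lattice `c (Aᵀ)⁻¹(ℤ^d)`. -/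
def dualLatPt (A : Matrix (Fin d) (Fin d) ℝ) (c : ℝ) (k : Fin d → ℤ) :
    EuclideanSpace ℝ (Fin d) :=
  toE (c • (A.transpose⁻¹.mulVec fun i => (k i : ℝ)))

/-- The parallelepiped `x₁ + A([0,1]^d)`. -/
def lattPara (A : Matrix (Fin d) (Fin d) ℝ) (x₁ : EuclideanSpace ℝ (Fin d)) :
    Set (EuclideanSpace ℝ (Fin d)) :=
  (fun t : Fin d → ℝ => x₁ + toE (A.mulVec t)) '' (Set.univ.pi fun _ => Set.Icc 0 1)

/-- The adjoint short-time Fourier transform `V*_φ F`. -/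
def VStar (φ : EuclideanSpace ℝ (Fin d) → ℂ)
    (F : EuclideanSpace ℝ (Fin d) × EuclideanSpace ℝ (Fin d) → ℂ)
    (t : EuclideanSpace ℝ (Fin d)) : ℂ :=
  ((2 * Real.pi) ^ (-(d : ℝ) / 2) : ℝ) *
    ∫ z : EuclideanSpace ℝ (Fin d) × EuclideanSpace ℝ (Fin d),
      F z * Complex.exp ((⟪z.2, t⟫ : ℝ) * Complex.I) * φ (t - z.1)

/-!
Since `c ≤ 2π`, the lattice `Λ₂` is dual to a parallelepiped containing `D₁`. Near `tsupport f` the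
cutoff `ψ` agrees with an `s`-cutoff `m` supported in the interior of `D₁`, because convolving an
indicator function with a rescaled copy of `|ψ|²` yields `s`-cutoffs equal to `1` on a given compact
set. Expanding `m` in its Fourier series over `Λ₂` gives
`FT (ψ f) λ = κ ∑_{μ ∈ Λ₂} FT m μ · FT f (λ - μ)`,
a discrete convolution with a sequence decaying faster than every `exp (-N |μ|^{1/s})`. This decay
absorbs the loss `ω λ ≤ C exp (k |μ|^{1/s}) ω (λ - μ)` in the terms with `λ - μ ∈ Γ`. In the
remaining terms `λ ∈ Γ₀` and `λ - μ ∉ Γ` force `|λ| ≤ C |μ|`, so that boundedness of `FT f` is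
enough.
-/

open scoped Convolution FourierTransform ComplexConjugate

section SubexpDecay

variable {E E' F F' : Type*} [NormedAddCommGroup E] [NormedAddCommGroup E']
  [NormedAddCommGroup F] [NormedAddCommGroup F'] {s : ℝ}

/-- Subexponential decay of Gevrey order `s`: `g` decays faster than every
`exp (-N ‖ξ‖ ^ (1 / s))`. An `s`-cutoff is a test function whose Fourier transform has this
property. -/
def SubexpDecay (s : ℝ) (g : E → F) : Prop :=
  ∀ N : ℝ, 0 < N → ∃ C : ℝ, 0 < C ∧ ∀ ξ, ‖g ξ‖ ≤ C * Real.exp (-N * ‖ξ‖ ^ (1 / s))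

lemma norm_add_rpow_one_div_le (hs : 1 ≤ s) (x y : E) :
    ‖x + y‖ ^ (1 / s) ≤ ‖x‖ ^ (1 / s) + ‖y‖ ^ (1 / s) :=
  (Real.rpow_le_rpow (norm_nonneg _) (norm_add_le x y) (by positivity)).trans
    (Real.rpow_add_le_add_rpow (norm_nonneg _) (norm_nonneg _) (by positivity)
      (div_le_one_of_le₀ hs (by positivity)))

lemma exists_rpow_le_mul_exp {a p : ℝ} (ha : 0 < a) (hp : 0 < p) :
    ∃ C : ℝ, 0 < C ∧ ∀ y : ℝ, 0 ≤ y → y ^ p ≤ C * Real.exp (a * y) := by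
  refine ⟨(p / a) ^ p, by positivity, fun y hy => ?_⟩
  have hle : a * y / p ≤ Real.exp (a * y / p) := by linarith [Real.add_one_le_exp (a * y / p)]
  calc y ^ p = (p / a) ^ p * (a * y / p) ^ p := by
        rw [← Real.mul_rpow (by positivity) (by positivity)]
        congr 1
        field_simp
    _ ≤ (p / a) ^ p * Real.exp (a * y / p) ^ p := by gcongr
    _ = (p / a) ^ p * Real.exp (a * y) := by rw [← Real.exp_mul, div_mul_cancel₀ _ hp.ne']

lemma exists_exp_neg_mul_rpow_le (hs : 1 ≤ s) {a r : ℝ} (ha : 0 < a) (hr : 0 < r) :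
    ∃ C : ℝ, 0 < C ∧ ∀ t : ℝ, 0 ≤ t →
      Real.exp (-a * t ^ (1 / s)) ≤ C * (1 + t) ^ (-r) := by
  have hs0 : 0 < s := by linarith
  obtain ⟨C, hC, hexp⟩ := exists_rpow_le_mul_exp ha (mul_pos hs0 hr)
  refine ⟨C * Real.exp a, by positivity, fun t ht => ?_⟩
  have hpow : 1 + t ≤ (1 + t ^ (1 / s)) ^ s := by
    calc 1 + t = 1 ^ s + (t ^ (1 / s)) ^ s := by
          rw [Real.one_rpow, ← Real.rpow_mul ht, one_div_mul_cancel hs0.ne', Real.rpow_one]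
      _ ≤ _ := Real.add_rpow_le_rpow_add zero_le_one (by positivity) hs
  have hbound : (1 + t) ^ r ≤ C * Real.exp a * Real.exp (a * t ^ (1 / s)) := by
    calc (1 + t) ^ r ≤ ((1 + t ^ (1 / s)) ^ s) ^ r := by gcongr
      _ = (1 + t ^ (1 / s)) ^ (s * r) := (Real.rpow_mul (by positivity) _ _).symm
      _ ≤ C * Real.exp (a * (1 + t ^ (1 / s))) := hexp _ (by positivity)
      _ = C * Real.exp a * Real.exp (a * t ^ (1 / s)) := by
        rw [mul_one_add, Real.exp_add, mul_assoc]
  rwa [Real.rpow_neg (by positivity), neg_mul, Real.exp_neg, ← div_eq_mul_inv,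
    le_div_iff₀ (by positivity), inv_mul_le_iff₀ (by positivity), mul_comm (Real.exp _)]

lemma integrable_exp_neg_norm_rpow [NormedSpace ℝ E] [FiniteDimensional ℝ E]
    [MeasurableSpace E] [BorelSpace E] {μ : Measure E} [μ.IsAddHaarMeasure] (hs : 1 ≤ s) {a : ℝ}
    (ha : 0 < a) : Integrable (fun ξ : E => Real.exp (-a * ‖ξ‖ ^ (1 / s))) μ := by
  obtain ⟨C, -, hexp⟩ := exists_exp_neg_mul_rpow_le hs ha
    (r := Module.finrank ℝ E + 1) (by positivity)
  have hcont : Continuous fun ξ : E => Real.exp (-a * ‖ξ‖ ^ (1 / s)) := by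
    fun_prop (disch := positivity)
  refine ((integrable_one_add_norm (lt_add_one _)).const_mul C).mono' hcont.aestronglyMeasurable
    (.of_forall fun ξ => ?_)
  rw [Real.norm_of_nonneg (Real.exp_pos _).le]
  exact hexp _ (norm_nonneg _)

namespace SubexpDecay

lemma of_norm_le_const_mul {g : E → F} {h : E → F'} (hg : SubexpDecay s g) {C : ℝ}
    (hle : ∀ ξ, ‖h ξ‖ ≤ C * ‖g ξ‖) : SubexpDecay s h := by
  intro N hN
  obtain ⟨B, hB, hgB⟩ := hg N hN
  refine ⟨(|C| + 1) * B, by positivity, fun ξ => (hle ξ).trans ?_⟩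
  rw [mul_assoc]
  gcongr
  · linarith [le_abs_self C]
  · exact hgB ξ

lemma comp_continuousLinearEquiv [NormedSpace ℝ E] [NormedSpace ℝ E'] {g : E → F}
    (hg : SubexpDecay s g) (hs : 0 < s) (T : E' ≃L[ℝ] E) : SubexpDecay s fun ξ => g (T ξ) := by
  intro N hN
  obtain ⟨κ, hκ, hT⟩ := (T.symm : E →L[ℝ] E').bound
  obtain ⟨B, hB, hgB⟩ := hg (N * κ ^ (1 / s)) (by positivity)
  refine ⟨B, hB, fun ξ => (hgB _).trans ?_⟩
  have hnorm : ‖ξ‖ ≤ κ * ‖T ξ‖ := by simpa using hT (T ξ)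
  have hrpow : ‖ξ‖ ^ (1 / s) ≤ κ ^ (1 / s) * ‖T ξ‖ ^ (1 / s) := by
    rw [← Real.mul_rpow hκ.le (norm_nonneg _)]
    gcongr
  gcongr B * Real.exp ?_
  nlinarith

lemma comp_smul [NormedSpace ℝ E] {g : E → F} (hg : SubexpDecay s g) (hs : 0 < s) {t : ℝ}
    (ht : t ≠ 0) : SubexpDecay s fun ξ => g (t • ξ) :=
  hg.comp_continuousLinearEquiv hs (ContinuousLinearEquiv.smulLeft (Units.mk0 t ht))

lemma exp_mul_norm {g : E → F} (hg : SubexpDecay s g) {k : ℝ} (hk : 0 ≤ k) :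
    SubexpDecay s fun ξ => Real.exp (k * ‖ξ‖ ^ (1 / s)) * ‖g ξ‖ := by
  intro N hN
  obtain ⟨B, hB, hgB⟩ := hg (N + k) (by positivity)
  refine ⟨B, hB, fun ξ => ?_⟩
  calc ‖Real.exp (k * ‖ξ‖ ^ (1 / s)) * ‖g ξ‖‖ = Real.exp (k * ‖ξ‖ ^ (1 / s)) * ‖g ξ‖ :=
        Real.norm_of_nonneg (by positivity)
    _ ≤ Real.exp (k * ‖ξ‖ ^ (1 / s)) * (B * Real.exp (-(N + k) * ‖ξ‖ ^ (1 / s))) := by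
        gcongr
        exact hgB ξ
    _ = B * Real.exp (-N * ‖ξ‖ ^ (1 / s)) := by
        rw [mul_left_comm, ← Real.exp_add]
        ring_nf

lemma norm_rpow {g : E → F} (hg : SubexpDecay s g) {q : ℝ} (hq : 0 < q) :
    SubexpDecay s fun ξ => ‖g ξ‖ ^ q := by
  intro N hN
  obtain ⟨B, hB, hgB⟩ := hg (N / q) (by positivity)
  refine ⟨B ^ q, by positivity, fun ξ => ?_⟩
  calc ‖‖g ξ‖ ^ q‖ = ‖g ξ‖ ^ q := Real.norm_of_nonneg (by positivity)
    _ ≤ (B * Real.exp (-(N / q) * ‖ξ‖ ^ (1 / s))) ^ q := by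
        gcongr
        exact hgB ξ
    _ = B ^ q * Real.exp (-N * ‖ξ‖ ^ (1 / s)) := by
        rw [Real.mul_rpow hB.le (by positivity), ← Real.exp_mul]
        congr 2
        field_simp

variable [NormedSpace ℝ E] [FiniteDimensional ℝ E] [MeasurableSpace E] [BorelSpace E]
  {μ : Measure E} [μ.IsAddHaarMeasure]

lemma integrable {g : E → F} (hg : SubexpDecay s g) (hs : 1 ≤ s)
    (hgm : AEStronglyMeasurable g μ) : Integrable g μ := by
  obtain ⟨C, -, hgC⟩ := hg 1 one_pos
  exact ((integrable_exp_neg_norm_rpow hs one_pos).const_mul C).mono' hgm (.of_forall hgC)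

lemma convolution {F'' : Type*} [NormedAddCommGroup F''] [NormedSpace ℝ F] [NormedSpace ℝ F']
    [NormedSpace ℝ F''] {g : E → F} {h : E → F'} (hg : SubexpDecay s g) (hh : SubexpDecay s h)
    (hs : 1 ≤ s) (L : F →L[ℝ] F' →L[ℝ] F'') : SubexpDecay s (g ⋆[L, μ] h) := by
  intro N hN
  obtain ⟨B, hB, hgB⟩ := hg (N + 1) (by positivity)
  obtain ⟨C, hC, hhC⟩ := hh N hN
  have hint : Integrable (fun η : E => Real.exp (-1 * ‖η‖ ^ (1 / s))) μ :=
    integrable_exp_neg_norm_rpow hs one_pos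
  set I := ∫ η, Real.exp (-1 * ‖η‖ ^ (1 / s)) ∂μ
  have hI : 0 ≤ I := integral_nonneg fun η => (Real.exp_pos _).le
  have hpos : 0 < ‖L‖ * B * C * I + 1 :=
    add_pos_of_nonneg_of_pos (mul_nonneg (by positivity) hI) one_pos
  refine ⟨‖L‖ * B * C * I + 1, hpos, fun ξ => ?_⟩
  have hbound (η : E) : ‖L (g η) (h (ξ - η))‖ ≤
      ‖L‖ * B * C * Real.exp (-N * ‖ξ‖ ^ (1 / s)) * Real.exp (-1 * ‖η‖ ^ (1 / s)) := by
    have htri : ‖ξ‖ ^ (1 / s) ≤ ‖η‖ ^ (1 / s) + ‖ξ - η‖ ^ (1 / s) := by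
      simpa using norm_add_rpow_one_div_le hs η (ξ - η)
    calc ‖L (g η) (h (ξ - η))‖ ≤ ‖L‖ * ‖g η‖ * ‖h (ξ - η)‖ := L.le_opNorm₂ _ _
      _ ≤ ‖L‖ * (B * Real.exp (-(N + 1) * ‖η‖ ^ (1 / s))) *
          (C * Real.exp (-N * ‖ξ - η‖ ^ (1 / s))) := by
          gcongr
          exacts [hgB η, hhC (ξ - η)]
      _ = ‖L‖ * B * C *
          Real.exp (-(N + 1) * ‖η‖ ^ (1 / s) + -N * ‖ξ - η‖ ^ (1 / s)) := by
          rw [Real.exp_add]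
          ring
      _ ≤ ‖L‖ * B * C * Real.exp (-N * ‖ξ‖ ^ (1 / s) + -1 * ‖η‖ ^ (1 / s)) := by
          gcongr ‖L‖ * B * C * Real.exp ?_
          linarith [mul_le_mul_of_nonneg_left htri hN.le]
      _ = _ := by rw [Real.exp_add, ← mul_assoc]
  calc ‖(g ⋆[L, μ] h) ξ‖
      ≤ ∫ η, ‖L‖ * B * C * Real.exp (-N * ‖ξ‖ ^ (1 / s)) *
          Real.exp (-1 * ‖η‖ ^ (1 / s)) ∂μ :=
        norm_integral_le_of_norm_le (hint.const_mul _) (.of_forall hbound)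
    _ = ‖L‖ * B * C * I * Real.exp (-N * ‖ξ‖ ^ (1 / s)) := by
        rw [integral_const_mul]
        ring
    _ ≤ _ := by
        gcongr
        exact le_add_of_nonneg_right zero_le_one

end SubexpDecay

end SubexpDecay

section Lattice

variable {ι E F : Type*} [NormedAddCommGroup E] [NormedSpace ℝ E]
  [NormedAddCommGroup F] {s : ℝ}

/-- The embedding of `ℤ^ι` onto the lattice `T(ℤ^ι)`. -/
def latticeHom (T : (ι → ℝ) ≃L[ℝ] E) : (ι → ℤ) →+ E :=
  (T : (ι → ℝ) →+ E).comp ((Int.castAddHom ℝ).compLeft ι)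

lemma latticeHom_apply (T : (ι → ℝ) ≃L[ℝ] E) (k : ι → ℤ) :
    latticeHom T k = T fun i => (k i : ℝ) := rfl

lemma summable_norm_intCast_rpow [Fintype ι] {r : ℝ} (hr : r < -Fintype.card ι) :
    Summable fun k : ι → ℤ => ‖(fun i => (k i : ℝ))‖ ^ r := by
  let b := Pi.basisFun ℝ ι
  let L : Submodule ℤ (ι → ℝ) := Submodule.span ℤ (Set.range b)
  have hmem (k : ι → ℤ) : (fun i => (k i : ℝ)) ∈ L :=
    (Module.Basis.mem_span_iff_repr_mem ℤ b _).2 fun i => ⟨k i, by simp [b]⟩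
  have hrank : Module.finrank ℤ L = Fintype.card ι := by
    rw [ZLattice.rank ℝ L, Module.finrank_fintype_fun_eq_card]
  have hsum := ZLattice.summable_norm_rpow L r (by rwa [hrank])
  refine hsum.comp_injective (i := fun k : ι → ℤ => (⟨_, hmem k⟩ : L)) fun j k hjk => ?_
  ext i
  simpa using congrFun (congrArg Subtype.val hjk) i

lemma exists_norm_intCast_le_latticeHom [Fintype ι] (T : (ι → ℝ) ≃L[ℝ] E) :
    ∃ κ : ℝ, 0 < κ ∧ ∀ k : ι → ℤ, ‖(fun i => (k i : ℝ))‖ ≤ κ * ‖latticeHom T k‖ := by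
  obtain ⟨κ, hκ, hT⟩ := (T.symm : E →L[ℝ] ι → ℝ).bound
  refine ⟨κ, hκ, fun k => ?_⟩
  simpa [latticeHom_apply] using hT (latticeHom T k)

lemma summable_exp_neg_norm_latticeHom [Finite ι] (hs : 1 ≤ s) {a : ℝ} (ha : 0 < a)
    (T : (ι → ℝ) ≃L[ℝ] E) :
    Summable fun k => Real.exp (-a * ‖latticeHom T k‖ ^ (1 / s)) := by
  have := Fintype.ofFinite ι
  set r : ℝ := Fintype.card ι + 1
  obtain ⟨C, hC, hexp⟩ := exists_exp_neg_mul_rpow_le hs ha (r := r) (by positivity)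
  obtain ⟨κ, hκ, hT⟩ := exists_norm_intCast_le_latticeHom T
  have hsum := summable_norm_intCast_rpow (ι := ι) (r := -r) (by simp [r])
  refine (hsum.mul_left (C * κ ^ r)).of_norm_bounded_eventually ?_
  filter_upwards [(Set.finite_singleton (0 : ι → ℤ)).compl_mem_cofinite] with k hk
  have hpos : 0 < ‖(fun i => (k i : ℝ))‖ :=
    norm_pos_iff.2 fun h0 => hk (funext fun i => by simpa using congrFun h0 i)
  calc ‖Real.exp (-a * ‖latticeHom T k‖ ^ (1 / s))‖
      ≤ C * (1 + ‖latticeHom T k‖) ^ (-r) := by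
        rw [Real.norm_of_nonneg (by positivity)]
        exact hexp _ (norm_nonneg _)
    _ ≤ C * (κ⁻¹ * ‖(fun i => (k i : ℝ))‖) ^ (-r) := by
        have : κ⁻¹ * ‖(fun i => (k i : ℝ))‖ ≤ ‖latticeHom T k‖ := by
          rw [inv_mul_le_iff₀ hκ]
          exact hT k
        gcongr C * ?_
        exact Real.rpow_le_rpow_of_nonpos (by positivity) (by linarith)
          (neg_nonpos.2 (by positivity))
    _ = C * κ ^ r * ‖(fun i => (k i : ℝ))‖ ^ (-r) := by
        rw [Real.mul_rpow (by positivity) hpos.le, Real.inv_rpow hκ.le, Real.rpow_neg hκ.le,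
          inv_inv, mul_assoc]

lemma SubexpDecay.summable_norm_latticeHom [Finite ι] {g : E → F} (hg : SubexpDecay s g)
    (hs : 1 ≤ s) (T : (ι → ℝ) ≃L[ℝ] E) : Summable fun k => ‖g (latticeHom T k)‖ := by
  obtain ⟨C, -, hgC⟩ := hg 1 one_pos
  exact ((summable_exp_neg_norm_latticeHom hs one_pos T).mul_left C).of_nonneg_of_le
    (fun _ => norm_nonneg _) fun k => hgC _

end Lattice

section DiscreteYoung

variable {q : ℝ}

lemma summable_add_rpow {α : Type*} (hq : 0 < q) {f g : α → ℝ} (hf0 : ∀ i, 0 ≤ f i)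
    (hg0 : ∀ i, 0 ≤ g i) (hf : Summable fun i => f i ^ q) (hg : Summable fun i => g i ^ q) :
    Summable fun i => (f i + g i) ^ q := by
  have hmem {u : α → ℝ} (hu : ∀ i, 0 ≤ u i) :
      Memℓp (E := fun _ => ℝ) u (ENNReal.ofReal q) ↔ Summable fun i => u i ^ q := by
    rw [memℓp_gen_iff (by simpa [hq.le]), ENNReal.toReal_ofReal hq.le]
    simp only [Real.norm_of_nonneg (hu _)]
  exact (hmem fun i => add_nonneg (hf0 i) (hg0 i)).1 (((hmem hf0).2 hf).add ((hmem hg0).2 hg))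

variable {G : Type*} [AddCommGroup G] {a b g : G → ℝ}

lemma summable_prod_mul_sub (hb0 : 0 ≤ b) (hg0 : 0 ≤ g) (hb : Summable b)
    (hg : Summable g) : Summable fun p : G × G => b p.2 * g (p.1 - p.2) := by
  have hprod : Summable fun p : G × G => b p.1 * g p.2 := hb.mul_of_nonneg hg hb0 hg0
  have hinj : Function.Injective fun p : G × G => (p.2, p.1 - p.2) := by
    rintro ⟨k, j⟩ ⟨k', j'⟩ h
    simp only [Prod.mk.injEq] at h
    obtain ⟨rfl, h⟩ := h
    rw [sub_left_inj.1 h]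
  exact (hprod.comp_injective hinj :)

/- Splitting off the summable factor `a` reduces the sum over `j` to a supremum, which is at most
the `ℓ^q` norm; unlike Young's inequality this works for every `q > 0`. -/
lemma summable_tsum_mul_mul_sub_rpow (hq : 0 < q) (ha0 : ∀ k, 0 ≤ a k) (hb0 : ∀ k, 0 ≤ b k)
    (hg0 : ∀ k, 0 ≤ g k) (ha : Summable a) (hb : Summable fun k => b k ^ q)
    (hg : Summable fun k => g k ^ q) :
    (∀ k, Summable fun j => a j * (b j * g (k - j))) ∧
      Summable fun k => (∑' j, a j * (b j * g (k - j))) ^ q := by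
  have hbg0 (k j : G) : 0 ≤ b j * g (k - j) := mul_nonneg (hb0 _) (hg0 _)
  have hprod : Summable fun p : G × G => (b p.2 * g (p.1 - p.2)) ^ q := by
    simp only [Real.mul_rpow (hb0 _) (hg0 _)]
    exact summable_prod_mul_sub (b := fun k => b k ^ q) (g := fun k => g k ^ q)
      (fun k => Real.rpow_nonneg (hb0 k) q) (fun k => Real.rpow_nonneg (hg0 k) q) hb hg
  set S : G → ℝ := fun k => ∑' j, (b j * g (k - j)) ^ q
  have hS0 (k : G) : 0 ≤ S k := tsum_nonneg fun j => Real.rpow_nonneg (hbg0 k j) q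
  have hle_S (k j : G) : b j * g (k - j) ≤ S k ^ q⁻¹ := by
    rw [Real.le_rpow_inv_iff_of_pos (hbg0 k j) (hS0 k) hq]
    exact (hprod.prod_factor k).le_tsum j fun i _ => Real.rpow_nonneg (hbg0 k i) q
  have hterm (k j : G) : a j * (b j * g (k - j)) ≤ a j * S k ^ q⁻¹ :=
    mul_le_mul_of_nonneg_left (hle_S k j) (ha0 j)
  have hterm0 (k j : G) : 0 ≤ a j * (b j * g (k - j)) := mul_nonneg (ha0 j) (hbg0 k j)
  have hsum (k : G) : Summable fun j => a j * (b j * g (k - j)) :=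
    (ha.mul_right _).of_nonneg_of_le (hterm0 k) (hterm k)
  refine ⟨hsum, (hprod.prod.mul_left ((∑' j, a j) ^ q)).of_nonneg_of_le
    (fun k => Real.rpow_nonneg (tsum_nonneg (hterm0 k)) q) fun k => ?_⟩
  calc (∑' j, a j * (b j * g (k - j))) ^ q ≤ ((∑' j, a j) * S k ^ q⁻¹) ^ q := by
        refine Real.rpow_le_rpow (tsum_nonneg (hterm0 k)) ?_ hq.le
        rw [← tsum_mul_right]
        exact (hsum k).tsum_le_tsum (hterm k) (ha.mul_right _)
    _ = (∑' j, a j) ^ q * S k := by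
        rw [Real.mul_rpow (tsum_nonneg ha0) (Real.rpow_nonneg (hS0 k) _),
          Real.rpow_inv_rpow (hS0 k) hq.ne']

end DiscreteYoung

section WeightedCones

lemma IsSAdmissible.exists_add_le {s : ℝ} {ω : EuclideanSpace ℝ (Fin d) → ℝ}
    (hω : IsSAdmissible s ω) :
    ∃ C k : ℝ, 0 < C ∧ 0 < k ∧
      ∀ x y, ω (x + y) ≤ C * Real.exp (k * ‖x‖ ^ (1 / s)) * ω y := by
  obtain ⟨-, hpos, v, -, -, -, -, C₀, k, C₁, hC₀, hk, hC₁, hv, hle⟩ := hω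
  refine ⟨C₁ * C₀, k, by positivity, hk, fun x y => (hle x y).trans ?_⟩
  have := (hpos y).le
  rw [mul_assoc C₁ C₀]
  gcongr C₁ * ?_ * ω y
  exact hv x

variable {Γ₀ Γ : Set (EuclideanSpace ℝ (Fin d))}

lemma exists_mul_norm_le_norm_sub (h₀c : IsCone Γ₀) (hΓo : IsOpen Γ) (hΓc : IsCone Γ)
    (hsub : closure Γ₀ \ {0} ⊆ Γ) :
    ∃ δ : ℝ, 0 < δ ∧ ∀ ξ ∈ Γ₀, ∀ η ∉ Γ, δ * ‖ξ‖ ≤ ‖ξ - η‖ := by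
  have hS : IsCompact (closure Γ₀ ∩ Metric.sphere 0 1) :=
    (isCompact_sphere 0 1).inter_left isClosed_closure
  have hSΓ : closure Γ₀ ∩ Metric.sphere 0 1 ⊆ Γ := fun x hx =>
    hsub ⟨hx.1, ne_zero_of_mem_unit_sphere ⟨x, hx.2⟩⟩
  obtain ⟨δ, hδ, hthick⟩ := hS.exists_thickening_subset_open hΓo hSΓ
  refine ⟨δ, hδ, fun ξ hξ η hη => ?_⟩
  by_contra! hlt
  have hξ0 : 0 < ‖ξ‖ := norm_pos_iff.2 fun h => h₀c.1 (h ▸ hξ)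
  have hmem : ‖ξ‖⁻¹ • η ∈ Γ := by
    refine hthick (Metric.mem_thickening_iff.2
      ⟨‖ξ‖⁻¹ • ξ, ⟨subset_closure (h₀c.2 ξ hξ _ (by positivity)), ?_⟩, ?_⟩)
    · simp [norm_smul, hξ0.ne']
    · rwa [dist_eq_norm, ← smul_sub, norm_smul, norm_sub_rev, norm_inv, norm_norm,
        inv_mul_lt_iff₀ hξ0, mul_comm]
  exact hη (by simpa [smul_smul, hξ0.ne'] using hΓc.2 _ hmem ‖ξ‖ hξ0)

variable {s : ℝ} {ω : EuclideanSpace ℝ (Fin d) → ℝ}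

lemma IsSAdmissible.exists_le_of_sub_notMem (hω : IsSAdmissible s ω) (hs : 1 ≤ s)
    (h₀c : IsCone Γ₀) (hΓo : IsOpen Γ) (hΓc : IsCone Γ) (hsub : closure Γ₀ \ {0} ⊆ Γ) :
    ∃ C K : ℝ, 0 < C ∧ 0 < K ∧ ∀ ξ ∈ Γ₀, ∀ η, ξ - η ∉ Γ →
      ω ξ ≤ C * (Real.exp (K * ‖η‖ ^ (1 / s)) * Real.exp (-1 * ‖ξ - η‖ ^ (1 / s))) := by
  obtain ⟨C, k, hC, hk, hωC⟩ := hω.exists_add_le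
  obtain ⟨δ, hδ, hsep⟩ := exists_mul_norm_le_norm_sub h₀c hΓo hΓc hsub
  have hω0 : 0 < ω 0 := hω.2.1 0
  refine ⟨C * ω 0, (k + 1) * δ⁻¹ ^ (1 / s) + 1, by positivity, by positivity,
    fun ξ hξ η hη => ?_⟩
  have hξη : ‖ξ‖ ^ (1 / s) ≤ δ⁻¹ ^ (1 / s) * ‖η‖ ^ (1 / s) := by
    rw [← Real.mul_rpow (by positivity) (norm_nonneg _)]
    have := hsep ξ hξ _ hη
    rw [sub_sub_cancel] at this
    gcongr
    rwa [← div_eq_inv_mul, le_div_iff₀' hδ]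
  have hdiff : ‖ξ - η‖ ^ (1 / s) ≤ ‖ξ‖ ^ (1 / s) + ‖η‖ ^ (1 / s) := by
    simpa [sub_eq_add_neg] using norm_add_rpow_one_div_le hs ξ (-η)
  calc ω ξ ≤ C * Real.exp (k * ‖ξ‖ ^ (1 / s)) * ω 0 := by simpa using hωC ξ 0
    _ = C * ω 0 * Real.exp (k * ‖ξ‖ ^ (1 / s)) := by ring
    _ ≤ C * ω 0 * Real.exp (((k + 1) * δ⁻¹ ^ (1 / s) + 1) * ‖η‖ ^ (1 / s) +
          -1 * ‖ξ - η‖ ^ (1 / s)) := by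
        gcongr
        linarith [mul_le_mul_of_nonneg_left hξη (by positivity : 0 ≤ k + 1)]
    _ = _ := by rw [Real.exp_add]

lemma IsSAdmissible.exists_norm_mul_le {F : Type*} [NormedAddCommGroup F]
    (hω : IsSAdmissible s ω) (hs : 1 ≤ s) (h₀c : IsCone Γ₀) (hΓo : IsOpen Γ) (hΓc : IsCone Γ)
    (hsub : closure Γ₀ \ {0} ⊆ Γ) {f : EuclideanSpace ℝ (Fin d) → F} {M : ℝ}
    (hM : ∀ ξ, ‖f ξ‖ ≤ M) :
    ∃ D K : ℝ, 0 < D ∧ 0 < K ∧ ∀ ξ ∈ Γ₀, ∀ η,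
      ‖f (ξ - η)‖ * ω ξ ≤ D * (Real.exp (K * ‖η‖ ^ (1 / s)) *
        (Γ.indicator (fun ζ => ‖f ζ‖ * ω ζ) (ξ - η) + Real.exp (-1 * ‖ξ - η‖ ^ (1 / s)))) := by
  obtain ⟨C, k, hC, hk, hin⟩ := hω.exists_add_le
  obtain ⟨C', k', hC', hk', hout⟩ := hω.exists_le_of_sub_notMem hs h₀c hΓo hΓc hsub
  have hM0 : 0 ≤ M := (norm_nonneg _).trans (hM 0)
  refine ⟨C + M * C', k + k', by positivity, by positivity, fun ξ hξ η => ?_⟩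
  have hω0 : 0 ≤ ω (ξ - η) := (hω.2.1 _).le
  by_cases hΓ : ξ - η ∈ Γ
  · rw [Set.indicator_of_mem hΓ]
    calc ‖f (ξ - η)‖ * ω ξ
        ≤ ‖f (ξ - η)‖ * (C * Real.exp (k * ‖η‖ ^ (1 / s)) * ω (ξ - η)) := by
          gcongr
          simpa using hin η (ξ - η)
      _ = C * (Real.exp (k * ‖η‖ ^ (1 / s)) * (‖f (ξ - η)‖ * ω (ξ - η) + 0)) := by ring
      _ ≤ _ := by
          gcongr
          · exact le_add_of_nonneg_right (by positivity)
          · exact le_add_of_nonneg_right hk'.le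
          · positivity
  · rw [Set.indicator_of_notMem hΓ, zero_add]
    calc ‖f (ξ - η)‖ * ω ξ ≤ M * (C' * (Real.exp (k' * ‖η‖ ^ (1 / s)) *
          Real.exp (-1 * ‖ξ - η‖ ^ (1 / s)))) :=
          mul_le_mul (hM _) (hout ξ hξ η hΓ) (hω.2.1 ξ).le hM0
      _ = M * C' * (Real.exp (k' * ‖η‖ ^ (1 / s)) *
          Real.exp (-1 * ‖ξ - η‖ ^ (1 / s))) := by ring
      _ ≤ _ := by
          gcongr
          · exact le_add_of_nonneg_left hC.le
          · exact le_add_of_nonneg_left hk.le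

lemma IsSAdmissible.exists_subexpDecay_mul_le {F F' : Type*} [NormedAddCommGroup F]
    [NormedAddCommGroup F'] (hω : IsSAdmissible s ω) (hs : 1 ≤ s) (h₀c : IsCone Γ₀)
    (hΓo : IsOpen Γ) (hΓc : IsCone Γ) (hsub : closure Γ₀ \ {0} ⊆ Γ)
    {f : EuclideanSpace ℝ (Fin d) → F} {M : ℝ} (hM : ∀ ξ, ‖f ξ‖ ≤ M)
    {g : EuclideanSpace ℝ (Fin d) → F'} (hg : SubexpDecay s g) :
    ∃ b : EuclideanSpace ℝ (Fin d) → ℝ, SubexpDecay s b ∧ (∀ η, 0 ≤ b η) ∧ ∀ ξ ∈ Γ₀, ∀ η,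
      ‖g η‖ * ‖f (ξ - η)‖ * ω ξ ≤ Real.exp (-1 * ‖η‖ ^ (1 / s)) * (b η *
        (Γ.indicator (fun ζ => ‖f ζ‖ * ω ζ) (ξ - η) + Real.exp (-1 * ‖ξ - η‖ ^ (1 / s)))) := by
  obtain ⟨D, K, hD, hK, hle⟩ := hω.exists_norm_mul_le hs h₀c hΓo hΓc hsub hM
  have hexp := hg.exp_mul_norm (by positivity : 0 ≤ K + 1)
  refine ⟨fun η => D * (Real.exp ((K + 1) * ‖η‖ ^ (1 / s)) * ‖g η‖),
    hexp.of_norm_le_const_mul (C := D) fun η => ?_, fun η => by positivity, fun ξ hξ η => ?_⟩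
  · rw [norm_mul, Real.norm_of_nonneg hD.le]
  · have hsplit : Real.exp (K * ‖η‖ ^ (1 / s)) =
        Real.exp (-1 * ‖η‖ ^ (1 / s)) * Real.exp ((K + 1) * ‖η‖ ^ (1 / s)) := by
      rw [← Real.exp_add]
      ring_nf
    calc ‖g η‖ * ‖f (ξ - η)‖ * ω ξ = ‖g η‖ * (‖f (ξ - η)‖ * ω ξ) := mul_assoc _ _ _
      _ ≤ ‖g η‖ * _ := mul_le_mul_of_nonneg_left (hle ξ hξ η) (norm_nonneg _)
      _ = _ := by
        rw [hsplit]
        ring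

lemma IsSAdmissible.summable_indicator_of_norm_le_tsum {ι F F' F'' : Type*} [Finite ι]
    [NormedAddCommGroup F] [NormedAddCommGroup F'] [NormedAddCommGroup F'']
    (hω : IsSAdmissible s ω) (hs : 1 ≤ s) (h₀c : IsCone Γ₀)
    (hΓo : IsOpen Γ) (hΓc : IsCone Γ) (hsub : closure Γ₀ \ {0} ⊆ Γ)
    {f : EuclideanSpace ℝ (Fin d) → F} {M : ℝ} (hM : ∀ ξ, ‖f ξ‖ ≤ M)
    {g : EuclideanSpace ℝ (Fin d) → F'} (hg : SubexpDecay s g)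
    (T : (ι → ℝ) ≃L[ℝ] EuclideanSpace ℝ (Fin d)) {h : EuclideanSpace ℝ (Fin d) → F''}
    (hh : ∀ k, ‖h (latticeHom T k)‖ ≤
      ∑' j, ‖g (latticeHom T j)‖ * ‖f (latticeHom T k - latticeHom T j)‖)
    {q : ℝ} (hq : 0 < q)
    (hf : Summable fun k => Γ.indicator (fun ξ => (‖f ξ‖ * ω ξ) ^ q) (latticeHom T k)) :
    Summable fun k => Γ₀.indicator (fun ξ => (‖h ξ‖ * ω ξ) ^ q) (latticeHom T k) := by
  have hω0 (ξ) : 0 ≤ ω ξ := (hω.2.1 ξ).le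
  obtain ⟨b, hb, hb0, hle⟩ := hω.exists_subexpDecay_mul_le hs h₀c hΓo hΓc hsub hM hg
  let a : (ι → ℤ) → ℝ := fun j => Real.exp (-1 * ‖latticeHom T j‖ ^ (1 / s))
  let u : (ι → ℤ) → ℝ := fun k => Γ.indicator (fun ξ => ‖f ξ‖ * ω ξ) (latticeHom T k)
  have ha0 (k) : 0 ≤ a k := (Real.exp_pos _).le
  have hu0 (k) : 0 ≤ u k :=
    Set.indicator_nonneg (fun ξ _ => mul_nonneg (norm_nonneg _) (hω0 ξ)) _
  have hu : Summable fun k => u k ^ q := by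
    convert hf using 2 with k
    exact (congrFun (Set.indicator_comp_of_zero (g := (· ^ q)) (Real.zero_rpow hq.ne')) _).symm
  have haq : Summable fun k => a k ^ q := by
    convert summable_exp_neg_norm_latticeHom hs hq T using 2 with k
    rw [← Real.exp_mul]
    ring_nf
  have hbq : Summable fun k => b (latticeHom T k) ^ q := by
    simpa only [Real.norm_of_nonneg, hb0, Real.rpow_nonneg]
      using (hb.norm_rpow hq).summable_norm_latticeHom hs T
  obtain ⟨hrow, hsum⟩ := summable_tsum_mul_mul_sub_rpow hq ha0 (fun _ => hb0 _)
    (fun k => add_nonneg (hu0 k) (ha0 k)) (summable_exp_neg_norm_latticeHom hs one_pos T) hbq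
    (summable_add_rpow hq hu0 ha0 hu haq)
  refine hsum.of_nonneg_of_le (fun k => Set.indicator_nonneg (fun ξ _ =>
    Real.rpow_nonneg (mul_nonneg (norm_nonneg _) (hω0 ξ)) q) _) fun k => ?_
  by_cases hk : latticeHom T k ∈ Γ₀
  · have hgf : Summable fun j =>
        ‖g (latticeHom T j)‖ * ‖f (latticeHom T k - latticeHom T j)‖ :=
      ((hg.summable_norm_latticeHom hs T).mul_right M).of_nonneg_of_le
        (fun _ => by positivity) fun _ => by gcongr; exact hM _
    rw [Set.indicator_of_mem hk]
    refine Real.rpow_le_rpow (mul_nonneg (norm_nonneg _) (hω0 _)) ?_ hq.le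
    refine (mul_le_mul_of_nonneg_right (hh k) (hω0 _)).trans ?_
    rw [← tsum_mul_right]
    refine (hgf.mul_right _).tsum_le_tsum (fun j => ?_) (hrow k)
    simpa only [a, u, map_sub] using hle _ hk (latticeHom T j)
  · rw [Set.indicator_of_notMem hk]
    exact Real.rpow_nonneg (tsum_nonneg fun j =>
      mul_nonneg (ha0 j) (mul_nonneg (hb0 _) (add_nonneg (hu0 _) (ha0 _)))) q

end WeightedCones

section Fourier

lemma fourier_mul_eq_convolution {V : Type*} [NormedAddCommGroup V] [InnerProductSpace ℝ V]
    [FiniteDimensional ℝ V] [MeasurableSpace V] [BorelSpace V] {φ χ : V → ℂ}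
    (hφc : Continuous φ) (hφ : Integrable φ) (hφF : Integrable (𝓕 φ))
    (hχc : Continuous χ) (hχ : Integrable χ) (hχF : Integrable (𝓕 χ)) :
    𝓕 (fun x => φ x * χ x) = (𝓕 φ ⋆[ContinuousLinearMap.mul ℂ ℂ] 𝓕 χ) := by
  set H := 𝓕 φ ⋆[ContinuousLinearMap.mul ℂ ℂ] 𝓕 χ with hH
  have hinv {u : V → ℂ} (huc : Continuous u) (hu : Integrable u) (huF : Integrable (𝓕 u)) (x : V) :
      𝓕 (𝓕 u) (-x) = u x := by
    rw [← Real.fourierInv_eq_fourier_neg, huc.fourierInv_fourier_eq hu huF]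
  have hcont {u : V → ℂ} (hu : Integrable u) : Continuous (𝓕 u) :=
    VectorFourier.fourierIntegral_continuous Real.continuous_fourierChar continuous_inner hu
  have hbdd {u : V → ℂ} (x : V) : ‖𝓕 u x‖ ≤ ∫ y, ‖u y‖ :=
    VectorFourier.norm_fourierIntegral_le_integral_norm _ _ _ u x
  have hFH (x : V) : 𝓕 H x = φ (-x) * χ (-x) := by
    rw [hH, Real.fourier_mul_convolution_eq hφF hχF, ← hinv hφc hφ hφF, ← hinv hχc hχ hχF, neg_neg]
  have hHc : Continuous H :=
    BddAbove.continuous_convolution_right_of_integrable _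
      ⟨_, Set.forall_mem_range.2 fun x => hbdd x⟩ hφF (hcont hχ)
  have hmul : Integrable fun x => φ x * χ x :=
    hφ.mul_bdd (c := ∫ y, ‖𝓕 χ y‖) hχc.aestronglyMeasurable
      (.of_forall fun x => hinv hχc hχ hχF x ▸ hbdd (-x))
  have hFHi : Integrable (𝓕 H) := by
    rw [funext hFH]
    exact hmul.comp_neg
  rw [← hHc.fourier_fourierInv_eq (hφF.integrable_convolution _ hχF) hFHi]
  congr 1
  funext x
  rw [Real.fourierInv_eq_fourier_neg, hFH, neg_neg]

variable {f : EuclideanSpace ℝ (Fin d) → ℂ}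

lemma FT_eq_fourier (f : EuclideanSpace ℝ (Fin d) → ℂ) (ξ : EuclideanSpace ℝ (Fin d)) :
    FT f ξ = ((2 * Real.pi) ^ (-(d : ℝ) / 2) : ℝ) * 𝓕 f ((2 * Real.pi)⁻¹ • ξ) := by
  rw [FT, Real.fourier_eq']
  congr 2
  funext x
  rw [smul_eq_mul, mul_comm, real_inner_smul_right, neg_mul 2 Real.pi, neg_mul (2 * Real.pi),
    mul_inv_cancel_left₀ Real.two_pi_pos.ne', ofReal_neg]

lemma norm_FT_le (f : EuclideanSpace ℝ (Fin d) → ℂ) (ξ : EuclideanSpace ℝ (Fin d)) :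
    ‖FT f ξ‖ ≤ (2 * Real.pi) ^ (-(d : ℝ) / 2) * ∫ x, ‖f x‖ := by
  rw [FT_eq_fourier, norm_mul, norm_real, Real.norm_of_nonneg (by positivity)]
  gcongr
  exact VectorFourier.norm_fourierIntegral_le_integral_norm _ _ _ _ _

lemma subexpDecay_FT_iff {s : ℝ} (hs : 0 < s) : SubexpDecay s (FT f) ↔ SubexpDecay s (𝓕 f) := by
  have hπ : (2 * Real.pi)⁻¹ ≠ 0 := by positivity
  refine ⟨fun h => ?_, fun h => ?_⟩
  · refine (h.comp_smul hs (inv_ne_zero hπ)).of_norm_le_const_mul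
      (C := ((2 * Real.pi) ^ (-(d : ℝ) / 2))⁻¹) fun ξ => ?_
    rw [FT_eq_fourier, smul_smul, mul_inv_cancel₀ hπ, one_smul, norm_mul, norm_real,
      Real.norm_of_nonneg (by positivity), inv_mul_cancel_left₀ (by positivity)]
  · refine (h.comp_smul hs hπ).of_norm_le_const_mul
      (C := (2 * Real.pi) ^ (-(d : ℝ) / 2)) fun ξ => ?_
    rw [FT_eq_fourier, norm_mul, norm_real, Real.norm_of_nonneg (by positivity)]

lemma isSCutoff_iff {s : ℝ} (hs : 0 < s) :
    IsSCutoff s f ↔ ContDiff ℝ (⊤ : ℕ∞) f ∧ HasCompactSupport f ∧ SubexpDecay s (𝓕 f) :=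
  and_congr_right fun _ => and_congr_right fun _ => subexpDecay_FT_iff hs

end Fourier

namespace IsSCutoff

variable {s : ℝ} {φ χ ψ u : EuclideanSpace ℝ (Fin d) → ℂ}
  {K U : Set (EuclideanSpace ℝ (Fin d))}

lemma continuous (hφ : IsSCutoff s φ) : Continuous φ := hφ.1.continuous

lemma integrable (hφ : IsSCutoff s φ) : Integrable φ :=
  hφ.continuous.integrable_of_hasCompactSupport hφ.2.1

lemma subexpDecay_fourier (hφ : IsSCutoff s φ) (hs : 0 < s) : SubexpDecay s (𝓕 φ) :=
  ((isSCutoff_iff hs).1 hφ).2.2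

lemma integrable_fourier (hφ : IsSCutoff s φ) (hs : 1 ≤ s) : Integrable (𝓕 φ) := by
  refine (hφ.subexpDecay_fourier (by positivity)).integrable hs
    (Continuous.aestronglyMeasurable ?_)
  exact VectorFourier.fourierIntegral_continuous Real.continuous_fourierChar continuous_inner
    hφ.integrable

lemma mul (hφ : IsSCutoff s φ) (hχ : IsSCutoff s χ) (hs : 1 ≤ s) :
    IsSCutoff s fun x => φ x * χ x := by
  have hs0 : 0 < s := by positivity
  refine (isSCutoff_iff hs0).2 ⟨hφ.1.mul hχ.1, hφ.2.1.mul_right, ?_⟩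
  rw [fourier_mul_eq_convolution hφ.continuous hφ.integrable (hφ.integrable_fourier hs)
    hχ.continuous hχ.integrable (hχ.integrable_fourier hs)]
  exact (hφ.subexpDecay_fourier hs0).convolution (hχ.subexpDecay_fourier hs0) hs
    (ContinuousLinearMap.mul ℝ ℂ)

lemma const_mul (hφ : IsSCutoff s φ) (a : ℂ) : IsSCutoff s fun x => a * φ x := by
  refine ⟨hφ.1.const_smul a, hφ.2.1.mul_left, ?_⟩
  refine SubexpDecay.of_norm_le_const_mul (g := FT φ) (C := ‖a‖) hφ.2.2 fun ξ => le_of_eq ?_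
  rw [← norm_mul, FT, FT, mul_left_comm a]
  simp only [mul_assoc, integral_const_mul]

lemma conj_comp (hφ : IsSCutoff s φ) : IsSCutoff s fun x => conj (φ x) := by
  refine ⟨conjCLE.contDiff.comp hφ.1, hφ.2.1.comp_left (map_zero _), fun N hN => ?_⟩
  obtain ⟨C, hC, h⟩ := hφ.2.2 N hN
  refine ⟨C, hC, fun ξ => ?_⟩
  have hFT : FT (fun x => conj (φ x)) ξ = conj (FT φ (-ξ)) := by
    simp [FT, ← integral_conj, ← Complex.exp_conj]
  rw [hFT, norm_conj, ← norm_neg ξ]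
  exact h (-ξ)

lemma comp_smul (hφ : IsSCutoff s φ) (hs : 0 < s) {t : ℝ} (ht : t ≠ 0) :
    IsSCutoff s fun x => φ (t • x) := by
  refine ⟨hφ.1.comp (contDiff_const_smul t),
    hφ.2.1.comp_homeomorph (Homeomorph.smulOfNeZero t ht), ?_⟩
  refine (SubexpDecay.comp_smul (g := FT φ) hφ.2.2 hs (inv_ne_zero ht)).of_norm_le_const_mul
    (C := |(t ^ d)⁻¹|) fun ξ => le_of_eq ?_
  have hint := Measure.integral_comp_smul volume
    (fun x => φ x * cexp (-(⟪x, t⁻¹ • ξ⟫ : ℝ) * I)) t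
  simp only [real_inner_smul_left, real_inner_smul_right, inv_mul_cancel_left₀ ht,
    finrank_euclideanSpace_fin] at hint
  simp only [FT, hint, norm_mul, norm_smul, real_inner_smul_right, Real.norm_eq_abs, abs_abs,
    mul_left_comm |(t ^ d)⁻¹|]

lemma convolution (hu : Integrable u) (huc : HasCompactSupport u) (hφ : IsSCutoff s φ)
    (hs : 0 < s) : IsSCutoff s (u ⋆[ContinuousLinearMap.mul ℂ ℂ] φ) := by
  refine (isSCutoff_iff hs).2 ⟨?_, huc.convolution _ hφ.2.1,
    (hφ.subexpDecay_fourier hs).of_norm_le_const_mul (C := ∫ y, ‖u y‖) fun ξ => ?_⟩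
  · exact hφ.2.1.contDiff_convolution_right (ContinuousLinearMap.mul ℝ ℂ)
      hu.locallyIntegrable hφ.1
  · rw [Real.fourier_mul_convolution_eq hu hφ.integrable, norm_mul]
    gcongr
    exact VectorFourier.norm_fourierIntegral_le_integral_norm _ _ _ _ _

lemma exists_integral_eq_one (hψ : IsSCutoff s ψ) (hψ0 : ψ ≠ 0) (hs : 1 ≤ s) :
    ∃ φ : EuclideanSpace ℝ (Fin d) → ℂ, IsSCutoff s φ ∧ ∫ x, φ x = 1 := by
  obtain ⟨x₀, hx₀⟩ := Function.ne_iff.1 hψ0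
  have hsq : IsSCutoff s fun x => conj (ψ x) * ψ x := hψ.conj_comp.mul hψ hs
  have hpos : 0 < ∫ x, ‖ψ x‖ ^ 2 :=
    (hψ.continuous.norm.pow 2).integral_pos_of_hasCompactSupport_nonneg_nonzero
      (hψ.2.1.comp_left (g := fun z : ℂ => ‖z‖ ^ 2) (by simp)) (fun x => sq_nonneg ‖ψ x‖)
      (x := x₀) (pow_ne_zero 2 (norm_ne_zero_iff.2 hx₀))
  have hint : ∫ x, conj (ψ x) * ψ x = (∫ x, ‖ψ x‖ ^ 2 : ℝ) := by
    simp only [conj_mul', ← ofReal_pow]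
    exact integral_ofReal
  refine ⟨_, hsq.const_mul (∫ x, ‖ψ x‖ ^ 2 : ℝ)⁻¹, ?_⟩
  rw [integral_const_mul, hint, inv_mul_cancel₀ (ofReal_ne_zero.2 hpos.ne')]

lemma exists_support_subset_ball (hψ : IsSCutoff s ψ) (hψ0 : ψ ≠ 0) (hs : 1 ≤ s) {ε : ℝ}
    (hε : 0 < ε) : ∃ φ : EuclideanSpace ℝ (Fin d) → ℂ,
      IsSCutoff s φ ∧ Function.support φ ⊆ Metric.ball 0 ε ∧ ∫ x, φ x = 1 := by
  obtain ⟨φ, hφ, hφ1⟩ := hψ.exists_integral_eq_one hψ0 hs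
  obtain ⟨R, hR, hφR⟩ := hφ.2.1.isCompact.isBounded.exists_pos_norm_lt
  have ht : R / ε ≠ 0 := by positivity
  refine ⟨_, (hφ.comp_smul (by positivity) ht).const_mul ((R / ε) ^ d : ℝ), fun x hx => ?_, ?_⟩
  · have hlt := hφR _ (subset_tsupport _ (right_ne_zero_of_mul hx))
    rw [norm_smul, Real.norm_of_nonneg (by positivity), div_mul_eq_mul_div,
      div_lt_iff₀ hε] at hlt
    exact mem_ball_zero_iff.2 (lt_of_mul_lt_mul_left hlt hR.le)
  · rw [integral_const_mul, Measure.integral_comp_smul, finrank_euclideanSpace_fin, hφ1,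
      abs_of_pos (by positivity), real_smul, mul_one, ← ofReal_mul,
      mul_inv_cancel₀ (by positivity), ofReal_one]

lemma exists_eqOn_one (hψ : IsSCutoff s ψ) (hψ0 : ψ ≠ 0) (hs : 1 ≤ s)
    (hK : IsCompact K) (hU : IsOpen U) (hKU : K ⊆ U) :
    ∃ χ : EuclideanSpace ℝ (Fin d) → ℂ, IsSCutoff s χ ∧ EqOn χ 1 K ∧ tsupport χ ⊆ U := by
  obtain ⟨δ, hδ, hδU⟩ := hK.exists_cthickening_subset_open hU hKU
  obtain ⟨φ, hφ, hφδ, hφ1⟩ := hψ.exists_support_subset_ball hψ0 hs (half_pos hδ)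
  set L := Metric.cthickening (δ / 2) K
  have hL : IsCompact L := hK.cthickening
  set u : EuclideanSpace ℝ (Fin d) → ℂ := L.indicator 1
  have hu : Integrable u :=
    (integrable_indicator_iff hL.measurableSet).2 (integrableOn_const hL.measure_lt_top.ne)
  have hcomm : u ⋆[ContinuousLinearMap.mul ℂ ℂ] φ = φ ⋆[ContinuousLinearMap.mul ℂ ℂ] u := by
    rw [← convolution_flip]
    congr 1
    ext
    simp
  have hconst {x : EuclideanSpace ℝ (Fin d)} (hx : ∀ y ∈ Metric.ball x (δ / 2), u y = u x) :
      (u ⋆[ContinuousLinearMap.mul ℂ ℂ] φ) x = u x := by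
    rw [hcomm, convolution_eq_right' _ hφδ hx]
    simp [integral_mul_const, hφ1]
  refine ⟨_, .convolution hu (.intro hL fun x hx => indicator_of_notMem hx 1) hφ (by positivity),
    fun x hx => ?_, (closure_minimal ?_ Metric.isClosed_cthickening).trans hδU⟩
  · have hmem {y} (hy : y ∈ Metric.ball x (δ / 2)) : u y = 1 :=
      indicator_of_mem (Metric.mem_cthickening_of_dist_le y x _ _ hx (Metric.mem_ball.1 hy).le) 1
    have hx1 := hmem (Metric.mem_ball_self (half_pos hδ))
    exact (hconst fun y hy => (hmem hy).trans hx1.symm).trans hx1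
  · refine Function.support_subset_iff'.2 fun x hx => ?_
    have hnotMem {y} (hy : y ∈ Metric.ball x (δ / 2)) : u y = 0 := by
      refine indicator_of_notMem (fun hyL => hx ?_) 1
      have hsub := Metric.cthickening_cthickening_subset (half_pos hδ).le (half_pos hδ).le K
      rw [add_halves] at hsub
      exact hsub (Metric.mem_cthickening_of_dist_le x y _ _ hyL (Metric.mem_ball'.1 hy).le)
    have hx0 := hnotMem (Metric.mem_ball_self (half_pos hδ))
    exact (hconst fun y hy => (hnotMem hy).trans hx0.symm).trans hx0

lemma exists_eqOn_tsupport_subset (hψ : IsSCutoff s ψ) (hs : 1 ≤ s) (hK : IsCompact K)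
    (hU : IsOpen U) (hKU : K ⊆ U) :
    ∃ m : EuclideanSpace ℝ (Fin d) → ℂ, IsSCutoff s m ∧ EqOn m ψ K ∧ tsupport m ⊆ U := by
  rcases eq_or_ne ψ 0 with rfl | hψ0
  · exact ⟨0, hψ, fun _ _ => rfl, by simp⟩
  obtain ⟨χ, hχ, hχK, hχU⟩ := hψ.exists_eqOn_one hψ0 hs hK hU hKU
  refine ⟨_, hψ.mul hχ hs, fun x hx => ?_, (tsupport_mul_subset_right (f := ψ)).trans hχU⟩
  simp [hχK hx]

end IsSCutoff

section FourierSeries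

variable {ι : Type*} {t : ι → ℝ}

/-- The representative in the cube `(0, 1]^ι` of a point of the torus. -/
def torusRep (y : UnitAddTorus ι) : ι → ℝ := fun i => AddCircle.equivIoc 1 0 (y i)

lemma coe_torusRep (y : UnitAddTorus ι) : (fun i => (torusRep y i : UnitAddCircle)) = y :=
  funext fun _ => AddCircle.coe_equivIoc

lemma torusRep_coe (ht : ∀ i, t i ∈ Ioc (0 : ℝ) (0 + 1)) :
    torusRep (fun i => (t i : UnitAddCircle)) = t :=
  funext fun i => AddCircle.equivIoc_coe_of_mem (ht i)

lemma continuousAt_torusRep {y : UnitAddTorus ι} (hy : ∀ i, y i ≠ 0) :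
    ContinuousAt torusRep y := by
  refine continuousAt_pi.2 fun i => continuous_subtype_val.continuousAt.comp ?_
  exact ContinuousAt.comp (f := fun y : UnitAddTorus ι => y i)
    (AddCircle.continuousAt_equivIoc 1 0 (hy i)) (continuous_apply i).continuousAt

variable {M : (ι → ℝ) → ℂ}

lemma continuous_comp_torusRep (hM : Continuous M)
    (hMs : tsupport M ⊆ univ.pi fun _ => Ioo 0 1) :
    Continuous fun y : UnitAddTorus ι => M (torusRep y) := by
  have hcompact : IsCompact (tsupport M) :=
    (isCompact_univ_pi fun _ => isCompact_Icc).of_isClosed_subset (isClosed_tsupport M)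
      (hMs.trans (pi_mono fun _ _ => Ioo_subset_Icc_self))
  have hclosed : IsClosed ((fun t i => (t i : UnitAddCircle)) '' tsupport M) :=
    (hcompact.image (by fun_prop)).isClosed
  refine continuous_of_tsupport fun y hy => ?_
  have hsub : Function.support (fun y : UnitAddTorus ι => M (torusRep y)) ⊆
      (fun t i => (t i : UnitAddCircle)) '' tsupport M :=
    fun y hy => ⟨torusRep y, subset_tsupport _ hy, coe_torusRep y⟩
  obtain ⟨t, ht, rfl⟩ := closure_minimal hsub hclosed hy
  refine hM.continuousAt.comp (continuousAt_torusRep fun i hi => ?_)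
  have hti := hMs ht i (mem_univ i)
  exact hti.1.ne' ((AddCircle.coe_eq_zero_iff_of_mem_Ico (Ioo_subset_Ico_self hti)).1 hi)

variable [Fintype ι]

lemma mFourier_coe_apply (n : ι → ℤ) (t : ι → ℝ) :
    UnitAddTorus.mFourier n (fun i => (t i : UnitAddCircle)) =
      cexp ((2 * Real.pi * ((fun i => (n i : ℝ)) ⬝ᵥ t) : ℝ) * I) := by
  simp only [UnitAddTorus.mFourier, ContinuousMap.coe_mk, fourier_coe_apply, ← Complex.exp_sum,
    dotProduct]
  push_cast [Finset.mul_sum, Finset.sum_mul]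
  exact congrArg _ (Finset.sum_congr rfl fun i _ => by ring)

lemma hasSum_fourier_of_tsupport_subset (hM : Continuous M)
    (hMs : tsupport M ⊆ univ.pi fun _ => Ioo 0 1) {a : (ι → ℤ) → ℂ} (ha : Summable a)
    (haM : ∀ n, a n = ∫ t, M t * cexp (-(2 * Real.pi * ((fun i => (n i : ℝ)) ⬝ᵥ t) : ℝ) * I))
    (ht : t ∈ univ.pi fun _ => Ioo 0 1) :
    HasSum (fun n => a n * cexp ((2 * Real.pi * ((fun i => (n i : ℝ)) ⬝ᵥ t) : ℝ) * I))
      (M t) := by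
  have hmem {t : ι → ℝ} (ht : t ∈ univ.pi fun _ => Ioo 0 1) (i : ι) :
      t i ∈ Ioc (0 : ℝ) (0 + 1) := by
    rw [zero_add]
    exact Ioo_subset_Ioc_self (ht i (mem_univ i))
  let g : C(UnitAddTorus ι, ℂ) := ⟨_, continuous_comp_torusRep hM hMs⟩
  have hg {t : ι → ℝ} (ht : ∀ i, t i ∈ Ioc (0 : ℝ) (0 + 1)) :
      g (fun i => (t i : UnitAddCircle)) = M t := congrArg M (torusRep_coe ht)
  have hcoeff : UnitAddTorus.mFourierCoeff g = a := by
    funext n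
    rw [UnitAddTorus.mFourierCoeff_eq_integral g n fun _ => 0, haM]
    have hcube : MeasurableSet {t : ι → ℝ | ∀ i, t i ∈ Ioc (0 : ℝ) (0 + 1)} :=
      .univ_pi' fun _ => measurableSet_Ioc
    refine (setIntegral_congr_fun hcube fun t ht => ?_).trans
      (setIntegral_eq_integral_of_forall_compl_eq_zero fun t ht => ?_)
    · rw [hg ht, UnitAddTorus.mFourier_neg, mFourier_coe_apply, smul_eq_mul, mul_comm,
        ← Complex.exp_conj, map_mul, conj_ofReal, conj_I, mul_neg, neg_mul]
    · rw [image_eq_zero_of_notMem_tsupport fun htM => ht (hmem (hMs htM)), zero_mul]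
  have hsum := UnitAddTorus.hasSum_mFourier_series_apply_of_summable (f := g)
    (hcoeff ▸ ha) fun i => (t i : UnitAddCircle)
  simpa only [hcoeff, hg (hmem ht), mFourier_coe_apply, smul_eq_mul] using hsum

end FourierSeries

section DualLattice

lemma exists_integral_comp_continuousLinearEquiv {ι V F : Type*} [Fintype ι]
    [NormedAddCommGroup V] [NormedSpace ℝ V] [MeasureSpace V] [BorelSpace V]
    [(volume : Measure V).IsAddHaarMeasure] [NormedAddCommGroup F] [NormedSpace ℝ F]
    (T : (ι → ℝ) ≃L[ℝ] V) :
    ∃ κ : ℝ≥0, ∀ h : V → F, ∫ t, h (T t) = κ • ∫ x, h x := by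
  have := T.toLinearEquiv.finiteDimensional
  have := T.isAddHaarMeasure_map volume
  have hmap := Measure.isAddLeftInvariant_eq_smul (Measure.map T volume) (volume : Measure V)
  refine ⟨Measure.addHaarScalarFactor (Measure.map T volume) volume, fun h => ?_⟩
  rw [← integral_smul_nnreal_measure, ← hmap]
  exact (T.toHomeomorph.measurableEmbedding.integral_map h).symm

variable {m f : EuclideanSpace ℝ (Fin d) → ℂ} {x₁ : EuclideanSpace ℝ (Fin d)}
  {T T' : (Fin d → ℝ) ≃L[ℝ] EuclideanSpace ℝ (Fin d)}

lemma exists_hasSum_FT_latticeHom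
    (hTT' : ∀ t u, (⟪T t, T' u⟫ : ℝ) = 2 * Real.pi * (u ⬝ᵥ t)) (hm : Continuous m)
    (hms : tsupport m ⊆ (fun t => x₁ + T t) '' univ.pi fun _ => Ioo 0 1)
    (hsum : Summable fun n => FT m (latticeHom T' n)) :
    ∃ κ : ℂ, ∀ x ∈ (fun t => x₁ + T t) '' univ.pi fun _ => Ioo 0 1,
      HasSum (fun n => κ * FT m (latticeHom T' n) * cexp ((⟪x, latticeHom T' n⟫ : ℝ) * I))
        (m x) := by
  obtain ⟨κ, hκ⟩ := exists_integral_comp_continuousLinearEquiv (F := ℂ) T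
  set p : ℝ := (2 * Real.pi) ^ (-(d : ℝ) / 2) with hp
  have hp0 : (p : ℂ) ≠ 0 := ofReal_ne_zero.2 (by positivity)
  have hphase (t : Fin d → ℝ) (n : Fin d → ℤ) :
      cexp ((⟪x₁ + T t, latticeHom T' n⟫ : ℝ) * I) =
        cexp ((⟪x₁, latticeHom T' n⟫ : ℝ) * I) *
          cexp ((2 * Real.pi * ((fun i => (n i : ℝ)) ⬝ᵥ t) : ℝ) * I) := by
    rw [inner_add_left, latticeHom_apply, hTT', ofReal_add, add_mul, Complex.exp_add]
  have hcoeff (n : Fin d → ℤ) :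
      κ * (p : ℂ)⁻¹ * FT m (latticeHom T' n) * cexp ((⟪x₁, latticeHom T' n⟫ : ℝ) * I) =
        ∫ t, m (x₁ + T t) * cexp (-(2 * Real.pi * ((fun i => (n i : ℝ)) ⬝ᵥ t) : ℝ) * I) := by
    have hchange := hκ fun y => m (x₁ + y) * cexp (-(⟪x₁ + y, latticeHom T' n⟫ : ℝ) * I)
    rw [integral_add_left_eq_self
      (fun x => m x * cexp (-(⟪x, latticeHom T' n⟫ : ℝ) * I)), NNReal.smul_def, real_smul]
      at hchange
    rw [FT, ← hp, mul_assoc (κ : ℂ), inv_mul_cancel_left₀ hp0]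
    refine (congrArg (· * _) hchange.symm).trans ?_
    rw [← integral_mul_const]
    congr 1
    funext t
    rw [neg_mul, Complex.exp_neg, hphase, mul_inv, neg_mul, Complex.exp_neg, mul_assoc,
      mul_right_comm, inv_mul_cancel₀ (Complex.exp_ne_zero _), one_mul]
  refine ⟨κ * (p : ℂ)⁻¹, ?_⟩
  rintro _ ⟨t, ht, rfl⟩
  have hM : tsupport (fun t => m (x₁ + T t)) ⊆ univ.pi fun _ => Ioo 0 1 := by
    let Φ := T.toHomeomorph.trans (Homeomorph.addLeft x₁)
    have hpre : tsupport (fun t => m (x₁ + T t)) = Φ ⁻¹' tsupport m :=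
      tsupport_comp_eq_preimage m Φ
    rw [hpre]
    exact (preimage_mono hms).trans (Φ.preimage_image _).subset
  have ha : Summable fun n => κ * (p : ℂ)⁻¹ * FT m (latticeHom T' n) *
      cexp ((⟪x₁, latticeHom T' n⟫ : ℝ) * I) := by
    refine .of_norm ?_
    simpa only [norm_mul, norm_exp_ofReal_mul_I, mul_one] using hsum.norm.mul_left _
  simpa only [hphase, mul_assoc] using
    hasSum_fourier_of_tsupport_subset (by fun_prop) hM ha hcoeff ht

lemma hasSum_FT_mul {α : Type*} [Countable α] {a : α → ℂ} {l : α → EuclideanSpace ℝ (Fin d)}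
    (hf : Integrable f) (ha : Summable fun n => ‖a n‖)
    (hm : ∀ x ∈ Function.support f, HasSum (fun n => a n * cexp ((⟪x, l n⟫ : ℝ) * I)) (m x))
    (ξ : EuclideanSpace ℝ (Fin d)) :
    HasSum (fun n => a n * FT f (ξ - l n)) (FT (fun x => m x * f x) ξ) := by
  set p : ℂ := (((2 * Real.pi) ^ (-(d : ℝ) / 2) : ℝ) : ℂ) with hp
  have hnorm (x η : EuclideanSpace ℝ (Fin d)) : ‖cexp (-(⟪x, η⟫ : ℝ) * I)‖ = 1 := by
    rw [← ofReal_neg, norm_exp_ofReal_mul_I]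
  have hint (η : EuclideanSpace ℝ (Fin d)) :
      Integrable fun x => f x * cexp (-(⟪x, η⟫ : ℝ) * I) :=
    hf.mul_bdd (c := 1) (Continuous.aestronglyMeasurable (by fun_prop))
      (.of_forall fun x => (hnorm x η).le)
  have hsum : Summable fun n => ∫ x, ‖a n * (f x * cexp (-(⟪x, ξ - l n⟫ : ℝ) * I))‖ := by
    simpa only [norm_mul, hnorm, mul_one, integral_const_mul] using ha.mul_right (∫ x, ‖f x‖)
  have hpoint (x : EuclideanSpace ℝ (Fin d)) :
      ∑' n, a n * (f x * cexp (-(⟪x, ξ - l n⟫ : ℝ) * I)) =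
        m x * f x * cexp (-(⟪x, ξ⟫ : ℝ) * I) := by
    by_cases hx : f x = 0
    · simp [hx]
    rw [mul_assoc, ← ((hm x hx).mul_right (f x * cexp (-(⟪x, ξ⟫ : ℝ) * I))).tsum_eq]
    refine tsum_congr fun n => ?_
    have hexp : cexp (-(⟪x, ξ - l n⟫ : ℝ) * I) =
        cexp ((⟪x, l n⟫ : ℝ) * I) * cexp (-(⟪x, ξ⟫ : ℝ) * I) := by
      rw [← Complex.exp_add, inner_sub_right, ofReal_sub]
      ring_nf
    rw [hexp, mul_left_comm (f x), mul_assoc]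
  have hseries := (hasSum_integral_of_summable_integral_norm
    (fun n => (hint (ξ - l n)).const_mul (a n)) hsum).mul_left p
  simpa only [hpoint, integral_const_mul, mul_left_comm p, FT, ← hp] using hseries

lemma norm_FT_mul_le_tsum {α : Type*} [Countable α] {a : α → ℂ}
    {l : α → EuclideanSpace ℝ (Fin d)} (hf : Integrable f) (ha : Summable fun n => ‖a n‖)
    (hm : ∀ x ∈ Function.support f, HasSum (fun n => a n * cexp ((⟪x, l n⟫ : ℝ) * I)) (m x))
    (ξ : EuclideanSpace ℝ (Fin d)) :
    ‖FT (fun x => m x * f x) ξ‖ ≤ ∑' n, ‖a n‖ * ‖FT f (ξ - l n)‖ := by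
  have hsum : Summable fun n => ‖a n * FT f (ξ - l n)‖ :=
    (ha.mul_right _).of_nonneg_of_le (fun _ => norm_nonneg _) fun n =>
      (norm_mul_le _ _).trans (mul_le_mul_of_nonneg_left (norm_FT_le f _) (norm_nonneg _))
  rw [← (hasSum_FT_mul hf ha hm ξ).tsum_eq]
  simpa only [norm_mul] using norm_tsum_le_tsum_norm hsum

end DualLattice

section MatrixLattice

variable {A B : Matrix (Fin d) (Fin d) ℝ} {c : ℝ}

/-- A nonsingular matrix as an isomorphism from the parameter space `ℝ^d`, which carries the
lattice `ℤ^d` and the unit cube, onto Euclidean space. -/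
def matEquiv (A : Matrix (Fin d) (Fin d) ℝ) (hA : IsUnit A.det) :
    (Fin d → ℝ) ≃L[ℝ] EuclideanSpace ℝ (Fin d) :=
  (A.toLinearEquiv' (A.invertibleOfIsUnitDet hA)).toContinuousLinearEquiv.trans
    (EuclideanSpace.equiv (Fin d) ℝ).symm

lemma matEquiv_apply (hA : IsUnit A.det) (t : Fin d → ℝ) :
    matEquiv A hA t = toE (A.mulVec t) := rfl

lemma inner_matEquiv (hA : IsUnit A.det) (hB : IsUnit B.det) (t u : Fin d → ℝ) :
    (⟪matEquiv A hA t, matEquiv B hB u⟫ : ℝ) = (A.transpose * B).mulVec u ⬝ᵥ t := by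
  calc (⟪matEquiv A hA t, matEquiv B hB u⟫ : ℝ) = B.mulVec u ⬝ᵥ A.mulVec t := by
        simp [matEquiv_apply, toE, PiLp.inner_apply, dotProduct, mul_comm]
    _ = _ := by
        rw [Matrix.dotProduct_mulVec, ← Matrix.mulVec_transpose, Matrix.mulVec_mulVec]

lemma isUnit_det_smul (hc : c ≠ 0) (hA : IsUnit A.det) : IsUnit (c • A).det := by
  rw [Matrix.det_smul]
  exact (hc.isUnit.pow _).mul hA

lemma isUnit_det_transpose_inv (hA : IsUnit A.det) : IsUnit A.transpose⁻¹.det := by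
  rwa [Matrix.isUnit_nonsing_inv_det_iff, Matrix.det_transpose]

lemma dualLatPt_eq_latticeHom (hB : IsUnit (c • A.transpose⁻¹).det) (k : Fin d → ℤ) :
    dualLatPt A c k = latticeHom (matEquiv _ hB) k := by
  rw [latticeHom_apply, matEquiv_apply, Matrix.smul_mulVec, dualLatPt]

lemma inner_matEquiv_smul_transpose_inv {r : ℝ} (hA : IsUnit A.det) (hrA : IsUnit (r • A).det)
    (hcA : IsUnit (c • A.transpose⁻¹).det) (t u : Fin d → ℝ) :
    (⟪matEquiv (r • A) hrA t, matEquiv (c • A.transpose⁻¹) hcA u⟫ : ℝ) = r * c * (u ⬝ᵥ t) := by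
  rw [inner_matEquiv, Matrix.transpose_smul, Matrix.smul_mul, Matrix.mul_smul,
    Matrix.mul_nonsing_inv _ (by rwa [Matrix.det_transpose]), smul_smul, Matrix.smul_mulVec,
    Matrix.one_mulVec, smul_dotProduct, smul_eq_mul]

lemma lattPara_eq_image (hA : IsUnit A.det) (x₁ : EuclideanSpace ℝ (Fin d)) :
    lattPara A x₁ = (fun t => x₁ + matEquiv A hA t) '' univ.pi fun _ => Icc 0 1 := rfl

lemma isCompact_lattPara (hA : IsUnit A.det) (x₁ : EuclideanSpace ℝ (Fin d)) :
    IsCompact (lattPara A x₁) := by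
  rw [lattPara_eq_image hA]
  exact (isCompact_univ_pi fun _ => isCompact_Icc).image (by fun_prop)

lemma interior_lattPara (hA : IsUnit A.det) (x₁ : EuclideanSpace ℝ (Fin d)) :
    interior (lattPara A x₁) = (fun t => x₁ + matEquiv A hA t) '' univ.pi fun _ => Ioo 0 1 := by
  let Φ := (matEquiv A hA).toHomeomorph.trans (Homeomorph.addLeft x₁)
  rw [lattPara_eq_image hA]
  refine (Φ.image_interior _).symm.trans ?_
  rw [interior_pi_set finite_univ]
  simp only [interior_Icc]
  rfl

lemma interior_lattPara_subset {r : ℝ} (hr : 1 ≤ r) (hA : IsUnit A.det)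
    (hrA : IsUnit (r • A).det) (x₁ : EuclideanSpace ℝ (Fin d)) :
    interior (lattPara A x₁) ⊆
      (fun t => x₁ + matEquiv (r • A) hrA t) '' univ.pi fun _ => Ioo 0 1 := by
  have hr0 : 0 < r := by positivity
  rw [interior_lattPara hA]
  rintro _ ⟨t, ht, rfl⟩
  refine ⟨r⁻¹ • t, fun i hi => ?_, ?_⟩
  · have hti := ht i hi
    exact ⟨mul_pos (inv_pos.2 hr0) hti.1,
      (mul_le_of_le_one_left hti.1.le (inv_le_one_of_one_le₀ hr)).trans_lt hti.2⟩
  · simp only [matEquiv_apply, Matrix.smul_mulVec, Matrix.mulVec_smul, smul_smul,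
      inv_mul_cancel₀ hr0.ne', one_smul]

lemma exists_hasSum_dualLatPt_of_tsupport_subset (hA : IsUnit A.det) (hc0 : 0 < c)
    (hc : c ≤ 2 * Real.pi) {m : EuclideanSpace ℝ (Fin d) → ℂ} (hm : Continuous m)
    {x₁ : EuclideanSpace ℝ (Fin d)} (hms : tsupport m ⊆ interior (lattPara A x₁))
    (hsum : Summable fun n => FT m (dualLatPt A c n)) :
    ∃ κ : ℂ, ∀ x ∈ interior (lattPara A x₁),
      HasSum (fun n => κ * FT m (dualLatPt A c n) * cexp ((⟪x, dualLatPt A c n⟫ : ℝ) * I))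
        (m x) := by
  have hrA := isUnit_det_smul (by positivity : 2 * Real.pi / c ≠ 0) hA
  have hcA := isUnit_det_smul hc0.ne' (isUnit_det_transpose_inv hA)
  have hcube := interior_lattPara_subset ((one_le_div hc0).2 hc) hA hrA x₁
  have hdual := inner_matEquiv_smul_transpose_inv hA hrA hcA
  rw [div_mul_cancel₀ _ hc0.ne'] at hdual
  simp only [dualLatPt_eq_latticeHom hcA] at hsum ⊢
  obtain ⟨κ, hκ⟩ := exists_hasSum_FT_latticeHom hdual hm (hms.trans hcube) hsum
  exact ⟨κ, fun x hx => hκ x (hcube hx)⟩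

lemma IsSCutoff.exists_subexpDecay_norm_FT_mul_le {s : ℝ}
    {ψ f : EuclideanSpace ℝ (Fin d) → ℂ} (hψ : IsSCutoff s ψ) (hs : 1 ≤ s) (hA : IsUnit A.det)
    (hc0 : 0 < c) (hc : c ≤ 2 * Real.pi) {x₁ : EuclideanSpace ℝ (Fin d)} (hf : Integrable f)
    (hsupp : tsupport f ⊆ interior (lattPara A x₁)) :
    ∃ g : EuclideanSpace ℝ (Fin d) → ℂ, SubexpDecay s g ∧
      ∀ ξ, ‖FT (fun x => ψ x * f x) ξ‖ ≤
        ∑' n, ‖g (dualLatPt A c n)‖ * ‖FT f (ξ - dualLatPt A c n)‖ := by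
  have hfc : IsCompact (tsupport f) := (isCompact_lattPara hA x₁).of_isClosed_subset
    (isClosed_tsupport f) (hsupp.trans interior_subset)
  obtain ⟨m, hm, hmψ, hms⟩ := hψ.exists_eqOn_tsupport_subset hs hfc isOpen_interior hsupp
  have hmf : (fun x => ψ x * f x) = fun x => m x * f x := funext fun x => by
    by_cases hx : x ∈ tsupport f
    · rw [hmψ hx]
    · rw [image_eq_zero_of_notMem_tsupport hx, mul_zero, mul_zero]
  have hcA := isUnit_det_smul hc0.ne' (isUnit_det_transpose_inv hA)
  have hsum : Summable fun n => ‖FT m (dualLatPt A c n)‖ := by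
    simpa only [dualLatPt_eq_latticeHom hcA] using
      SubexpDecay.summable_norm_latticeHom hm.2.2 hs (matEquiv _ hcA)
  obtain ⟨κ, hκ⟩ := exists_hasSum_dualLatPt_of_tsupport_subset hA hc0 hc hm.continuous hms
    hsum.of_norm
  refine ⟨fun ξ => κ * FT m ξ, SubexpDecay.of_norm_le_const_mul (g := FT m) hm.2.2 fun ξ =>
    (norm_mul κ _).le, fun ξ => ?_⟩
  rw [hmf]
  exact norm_FT_mul_le_tsum hf (by simpa only [norm_mul] using hsum.mul_left ‖κ‖)
    (fun x hx => hκ x (hsupp (subset_tsupport f hx))) ξ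

end MatrixLattice

theorem stmt15_general {s q : ℝ} (hs : 1 ≤ s) (hq : 0 < q)
    {ω : EuclideanSpace ℝ (Fin d) → ℝ} (hω : IsSAdmissible s ω)
    {A : Matrix (Fin d) (Fin d) ℝ} (hA : IsUnit A.det)
    {c : ℝ} (hc0 : 0 < c) (hc : c ≤ 2 * Real.pi) {x₁ : EuclideanSpace ℝ (Fin d)}
    {f : EuclideanSpace ℝ (Fin d) → ℂ} (hf : Integrable f)
    (hsupp : tsupport f ⊆ interior (lattPara A x₁))
    {Γ₀ Γ : Set (EuclideanSpace ℝ (Fin d))} (h₀c : IsCone Γ₀) (hΓo : IsOpen Γ)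
    (hΓc : IsCone Γ) (hsub : closure Γ₀ \ {0} ⊆ Γ)
    (h : Summable fun k : Fin d → ℤ =>
      Γ.indicator (fun ξ => (‖FT f ξ‖ * ω ξ) ^ q) (dualLatPt A c k))
    {ψ : EuclideanSpace ℝ (Fin d) → ℂ} (hψ : IsSCutoff s ψ) :
    Summable fun k : Fin d → ℤ =>
      Γ₀.indicator (fun ξ => (‖FT (fun x => ψ x * f x) ξ‖ * ω ξ) ^ q) (dualLatPt A c k) := by
  have hcA := isUnit_det_smul hc0.ne' (isUnit_det_transpose_inv hA)
  obtain ⟨g, hg, hle⟩ := hψ.exists_subexpDecay_norm_FT_mul_le hs hA hc0 hc hf hsupp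
  simp only [dualLatPt_eq_latticeHom hcA] at h hle ⊢
  exact hω.summable_indicator_of_norm_le_tsum hs h₀c hΓo hΓc hsub (norm_FT_le f) hg _
    (fun k => hle _) hq h

theorem stmt15 {d : ℕ} (s q : ℝ) (hs : 1 < s) (hq : 1 ≤ q)
    (ω : EuclideanSpace ℝ (Fin d) → ℝ) (hω : IsSAdmissible s ω)
    (A : Matrix (Fin d) (Fin d) ℝ) (hA : IsUnit A.det)
    (c : ℝ) (hc0 : 0 < c) (hc : c < 2 * Real.pi) (x₁ : EuclideanSpace ℝ (Fin d))
    (f : EuclideanSpace ℝ (Fin d) → ℂ) (hf : Integrable f) (hfc : HasCompactSupport f)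
    (hsupp : tsupport f ⊆ interior (lattPara A x₁))
    (Γ₀ Γ : Set (EuclideanSpace ℝ (Fin d)))
    (h₀o : IsOpen Γ₀) (h₀c : IsCone Γ₀) (hΓo : IsOpen Γ) (hΓc : IsCone Γ)
    (hsub : closure Γ₀ \ {0} ⊆ Γ)
    (h : Summable fun k : Fin d → ℤ =>
      Γ.indicator (fun ξ => (‖FT f ξ‖ * ω ξ) ^ q) (dualLatPt A c k)) :
    ∀ ψ : EuclideanSpace ℝ (Fin d) → ℂ, IsSCutoff s ψ →
      Summable fun k : Fin d → ℤ =>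
        Γ₀.indicator (fun ξ => (‖FT (fun x => ψ x * f x) ξ‖ * ω ξ) ^ q)
          (dualLatPt A c k) :=
  fun _ hψ => stmt15_general hs.le (by positivity) hω hA hc0 hc.le hf hsupp h₀c hΓo hΓc hsub h hψ

end Paper
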